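/- Let ℳ = {M₁,…,M_l} be a Morse decomposition of an attractor 𝒜 with Morse filtration ∅ = A₀ ⊆ A₁ ⊆ … ⊆ A_l = 𝒜. Then: (1) for each k, (A_{k-1}, M_k) is an attractor–repeller pair in A_k, i.e., A_{k-1} is an attractor in A_k and M_k is its dual repeller in A_k; (2) the sets M_k are pairwise disjoint, weakly invariant, and compact; (3) if γ : ℝ → 𝒜 is a complete solution of the inclusion lying in 𝒜, then either γ(ℝ) ⊆ M_k for some k, or there exist indices i < j with α(γ) ⊆ M_j and ω(γ) ⊆ M_i; (4) A_k = ∪_{1 ≤ i ≤ k} W^u(M_i) for 1 ≤ k ≤ l, where W^u(M_i) = {x : there is a complete solution γ : ℝ → 𝒜 with γ(0) = x and α(γ) ⊆ M_i}. -/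

import Mathlib

open Set Filter Topology MeasureTheory Metric Pointwise

namespace DI

/-- The phase space `X = ℝ^m`. -/
abbrev X (m : ℕ) := EuclideanSpace ℝ (Fin m)

variable {m : ℕ}

/-- Standing assumptions (H1)–(H2): `F x` is a nonempty convex compact set for every `x`,
and `F` is upper semicontinuous (as a set-valued map). -/
def Standing (F : X m → Set (X m)) : Prop :=
  (∀ x, (F x).Nonempty ∧ Convex ℝ (F x) ∧ IsCompact (F x)) ∧
  (∀ x, ∀ ε > 0, ∃ δ > 0, ∀ y, dist y x < δ → F y ⊆ Metric.thickening ε (F x))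

/-- `γ` is a solution of the differential inclusion `x' ∈ F x` on the set `I`:
it is an indefinite integral (hence absolutely continuous on compact subintervals)
of an integrable selection `g` with `g u ∈ F (γ u)` for a.e. `u ∈ I`. -/
def IsSolOn (F : X m → Set (X m)) (γ : ℝ → X m) (I : Set ℝ) : Prop :=
  ∃ g : ℝ → X m,
    (∀ s ∈ I, ∀ t ∈ I, IntervalIntegrable g volume s t ∧ γ t = γ s + ∫ u in s..t, g u) ∧
    (∀ᵐ u ∂(volume.restrict I), g u ∈ F (γ u))

/-- The reachable set `ℛ(t)x` of the inclusion `x' ∈ F x`. -/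
def reach (F : X m → Set (X m)) (t : ℝ) (x : X m) : Set (X m) :=
  {y | ∃ γ : ℝ → X m, IsSolOn F γ (Icc 0 t) ∧ γ 0 = x ∧ γ t = y}

/-- `ℛ(t)A`. -/
def reachSet (F : X m → Set (X m)) (t : ℝ) (A : Set (X m)) : Set (X m) :=
  ⋃ x ∈ A, reach F t x

/-- No solution starting in `B` blows up on `[0,T]`: every solution on a subinterval
`[0,s] ⊆ [0,T]` starting in `B` extends to a solution on `[0,T]`. -/
def NoBlowupUpTo (F : X m → Set (X m)) (B : Set (X m)) (T : ℝ) : Prop :=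
  ∀ s ∈ Icc (0:ℝ) T, ∀ γ : ℝ → X m, IsSolOn F γ (Icc 0 s) → γ 0 ∈ B →
    ∃ γ' : ℝ → X m, IsSolOn F γ' (Icc 0 T) ∧ EqOn γ' γ (Icc 0 s)

/-- No solution starting in `B` blows up in finite time. -/
def NoBlowup (F : X m → Set (X m)) (B : Set (X m)) : Prop :=
  ∀ T > 0, NoBlowupUpTo F B T

/-- `A` attracts `B` (in the strong sense): no solution from `B` blows up in finite
time and `d_H(ℛ(t)B, A) → 0` as `t → ∞`. -/
def Attracts (F : X m → Set (X m)) (A B : Set (X m)) : Prop :=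
  NoBlowup F B ∧
  ∀ ε > 0, ∃ T : ℝ, ∀ t ≥ T, ∀ y ∈ reachSet F t B, Metric.infDist y A < ε

/-- The attraction basin `Ω(A)`. -/
def basin (F : X m → Set (X m)) (A : Set (X m)) : Set (X m) :=
  {x | Attracts F A {x}}

/-- `A` is positively invariant. -/
def PosInvariant (F : X m → Set (X m)) (A : Set (X m)) : Prop :=
  ∀ t ≥ (0:ℝ), reachSet F t A ⊆ A

/-- `A` is invariant. -/
def Invariant (F : X m → Set (X m)) (A : Set (X m)) : Prop :=
  ∀ t ≥ (0:ℝ), reachSet F t A = A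

/-- The ω-limit set `ω(A)`. -/
def omegaLim (F : X m → Set (X m)) (A : Set (X m)) : Set (X m) :=
  {y | ∃ (t : ℕ → ℝ) (p : ℕ → X m), Tendsto t atTop atTop ∧
    (∀ n, p n ∈ reachSet F (t n) A) ∧ Tendsto p atTop (𝓝 y)}

/-- `𝒜` is an attractor: a compact set admitting a neighborhood `U` with `ω(U) = 𝒜`. -/
def IsAttractor (F : X m → Set (X m)) (𝒜 : Set (X m)) : Prop :=
  IsCompact 𝒜 ∧ ∃ U : Set (X m), 𝒜 ⊆ interior U ∧ omegaLim F U = 𝒜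

/-- `O` is an attractor neighborhood of `𝒜`: a positively invariant neighborhood of `𝒜`
contained in the attraction basin `Ω(𝒜)`. -/
def IsAttractorNbhd (F : X m → Set (X m)) (𝒜 O : Set (X m)) : Prop :=
  𝒜 ⊆ interior O ∧ PosInvariant F O ∧ O ⊆ basin F 𝒜

/-- The attraction basin of `A` in `U`: `Ω^U(A) = Ω(A) ∩ {x ∈ U : ℛ(t)x ⊆ U ∀ t ≥ 0}`. -/
def basinIn (F : X m → Set (X m)) (U A : Set (X m)) : Set (X m) :=
  basin F A ∩ {x ∈ U | ∀ t ≥ (0:ℝ), reach F t x ⊆ U}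

/-- The right-hand side of the inflated inclusion:
`clconv F(x + δ B̄₁) + δ B̄₁`. -/
def inflate (F : X m → Set (X m)) (δ : ℝ) (x : X m) : Set (X m) :=
  closure (convexHull ℝ (⋃ y ∈ Metric.closedBall x δ, F y)) +
    Metric.closedBall (0 : X m) δ

/-- `S` is weakly invariant: through every point of `S` passes a complete
solution contained in `S`. -/
def WeaklyInvariant (F : X m → Set (X m)) (S : Set (X m)) : Prop :=
  ∀ x ∈ S, ∃ γ : ℝ → X m, IsSolOn F γ univ ∧ γ 0 = x ∧ range γ ⊆ S

/-- `A` is an attractor in `𝒜`: compact, `A ⊆ 𝒜`, and `ω(U ∩ 𝒜) = A` for some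
neighborhood `U` of `A`. -/
def IsAttractorIn (F : X m → Set (X m)) (𝒜 A : Set (X m)) : Prop :=
  IsCompact A ∧ A ⊆ 𝒜 ∧ ∃ U : Set (X m), A ⊆ interior U ∧ omegaLim F (U ∩ 𝒜) = A

/-- The dual repeller `A* = {x ∈ 𝒜 : ω(x) ∖ A ≠ ∅}` of `A` in `𝒜`. -/
def dualRepeller (F : X m → Set (X m)) (𝒜 A : Set (X m)) : Set (X m) :=
  {x ∈ 𝒜 | (omegaLim F {x} \ A).Nonempty}

/-- The ω-limit set of a complete solution. -/
def omegaOf (γ : ℝ → X m) : Set (X m) :=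
  {y | ∃ t : ℕ → ℝ, Tendsto t atTop atTop ∧ Tendsto (fun n => γ (t n)) atTop (𝓝 y)}

/-- The α-limit set of a complete solution. -/
def alphaOf (γ : ℝ → X m) : Set (X m) :=
  {y | ∃ t : ℕ → ℝ, Tendsto t atTop atBot ∧ Tendsto (fun n => γ (t n)) atTop (𝓝 y)}

/-- The unstable set `W^u(S)` (within `𝒜`). -/
def unstableSet (F : X m → Set (X m)) (𝒜 S : Set (X m)) : Set (X m) :=
  {x | ∃ γ : ℝ → X m, IsSolOn F γ univ ∧ range γ ⊆ 𝒜 ∧ γ 0 = x ∧ alphaOf γ ⊆ S}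

/-- `A 0 ⊆ A 1 ⊆ ⋯ ⊆ A l` is a Morse filtration of the attractor `𝒜`. -/
def IsMorseFiltration (F : X m → Set (X m)) (𝒜 : Set (X m)) (l : ℕ)
    (A : ℕ → Set (X m)) : Prop :=
  A 0 = ∅ ∧ A l = 𝒜 ∧ (∀ k < l, A k ⊆ A (k+1)) ∧ ∀ k ≤ l, IsAttractorIn F 𝒜 (A k)

/-- `M 1, …, M l` is a Morse decomposition of the attractor `𝒜`. -/
def IsMorseDecomposition (F : X m → Set (X m)) (𝒜 : Set (X m)) (l : ℕ)
    (M : ℕ → Set (X m)) : Prop :=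
  (∀ k, 1 ≤ k → k ≤ l → IsCompact (M k) ∧ M k ⊆ 𝒜) ∧
  ∃ A : ℕ → Set (X m), IsMorseFiltration F 𝒜 l A ∧
    ∀ k, 1 ≤ k → k ≤ l → M k = A k ∩ dualRepeller F 𝒜 (A (k-1))

/-- `V` is radially unbounded (class `𝒦∞`) on the open set `U`. -/
def RadiallyUnbounded (U : Set (X m)) (V : X m → ℝ) : Prop :=
  ∀ R > (0:ℝ), ∃ K : Set (X m), K ⊆ U ∧ IsCompact K ∧ ∀ x ∈ U \ K, V x > R

/-- `V` is locally Lipschitz on `O`. -/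
def LocallyLipschitzOn (O : Set (X m)) (V : X m → ℝ) : Prop :=
  ∀ x ∈ O, ∃ ε > (0:ℝ), ∃ L : NNReal, LipschitzOnWith L V (Metric.ball x ε ∩ O)

/-- The set-valued map `F` is locally Lipschitz:
`F x ⊆ F y + L‖x - y‖ B̄₁` on compact sets. -/
def LocallyLipschitzMap (F : X m → Set (X m)) : Prop :=
  ∀ K : Set (X m), IsCompact K → ∃ L > (0:ℝ), ∀ x ∈ K, ∀ y ∈ K,
    F x ⊆ F y + Metric.closedBall (0 : X m) (L * ‖x - y‖)

/-- The Dini supderivative `D⁺_v V(x) = limsup_{τ→0⁺} (V(x+τv) - V x)/τ`. -/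
noncomputable def diniSup (V : X m → ℝ) (x v : X m) : ℝ :=
  limsup (fun τ : ℝ => (V (x + τ • v) - V x) / τ) (𝓝[>] 0)

/-- `A` is a strong deformation retract of `Y`. -/
def IsSDR (A Y : Set (X m)) : Prop :=
  A ⊆ Y ∧ ∃ H : ℝ × X m → X m, ContinuousOn H (Icc (0:ℝ) 1 ×ˢ Y) ∧
    (∀ σ ∈ Icc (0:ℝ) 1, ∀ y ∈ Y, H (σ, y) ∈ Y) ∧
    (∀ y ∈ Y, H (0, y) = y) ∧ (∀ y ∈ Y, H (1, y) ∈ A) ∧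
    (∀ σ ∈ Icc (0:ℝ) 1, ∀ a ∈ A, H (σ, a) = a)

/-- `V` is a Morse–Lyapunov function of the Morse decomposition `M` of `𝒜` on the
attraction basin `Ω(𝒜)`: continuous, constant on each Morse set, and strictly
decreasing along solutions lying in `Ω(𝒜) ∖ 𝒟`, where `𝒟 = ⋃ₖ M k`. -/
def IsMLFunction (F : X m → Set (X m)) (𝒜 : Set (X m)) (l : ℕ) (M : ℕ → Set (X m))
    (V : X m → ℝ) : Prop :=
  ContinuousOn V (basin F 𝒜) ∧
  (∀ k, 1 ≤ k → k ≤ l → ∃ c : ℝ, ∀ x ∈ M k, V x = c) ∧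
  (∀ a b : ℝ, ∀ γ : ℝ → X m, IsSolOn F γ (Icc a b) →
    (∀ t ∈ Icc a b, γ t ∈ basin F 𝒜 \ ⋃ k ∈ Icc 1 l, M k) →
    StrictAntiOn (fun t => V (γ t)) (Icc a b))

/-- A strict Morse–Lyapunov function: in addition `V(M i) < V(M j)` whenever
`i < j` and both Morse sets are nonempty. -/
def IsStrictML (F : X m → Set (X m)) (𝒜 : Set (X m)) (l : ℕ) (M : ℕ → Set (X m))
    (V : X m → ℝ) : Prop :=
  IsMLFunction F 𝒜 l M V ∧
  ∀ i j, 1 ≤ i → i < j → j ≤ l → ∀ x ∈ M i, ∀ y ∈ M j, V x < V y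




lemma ftc_lip {K : NNReal} {f : ℝ → X m} (hf : LipschitzWith K f) (a b : ℝ) :
    IntervalIntegrable (deriv f) volume a b ∧ f b = f a + ∫ u in a..b, deriv f u := by
  have hint : IntervalIntegrable (deriv f) volume a b := by
    refine (intervalIntegrable_const (c := (K:ℝ))).mono_fun
      (stronglyMeasurable_deriv f).aestronglyMeasurable ?_
    refine Eventually.of_forall fun u => ?_
    simpa using norm_deriv_le_of_lipschitz hf
  refine ⟨hint, ?_⟩
  rw [← sub_eq_iff_eq_add']
  ext i
  have h1 : (∫ u in a..b, deriv f u) i = ∫ u in a..b, (deriv f u) i := by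
    have := (EuclideanSpace.proj i : X m →L[ℝ] ℝ).intervalIntegral_comp_comm hint
    simpa using this.symm
  rw [h1]
  have hli : LipschitzWith K (fun t => f t i) := by
    refine LipschitzWith.of_dist_le_mul fun x y => ?_
    refine le_trans ?_ (hf.dist_le_mul x y)
    rw [dist_eq_norm, dist_eq_norm]
    exact PiLp.norm_apply_le (f x - f y) i
  have h2 : ∫ u in a..b, (deriv f u) i = ∫ u in a..b, deriv (fun t => f t i) u := by
    apply intervalIntegral.integral_congr_ae
    filter_upwards [hf.ae_differentiableAt_real] with u hu _
    have := ((EuclideanSpace.proj i : X m →L[ℝ] ℝ).hasFDerivAt.comp_hasDerivAt u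
      hu.hasDerivAt)
    have h3 := this.deriv
    simpa [Function.comp_def] using h3.symm
  rw [h2, (hli.lipschitzOnWith.absolutelyContinuousOnInterval (a := a) (b := b)).integral_deriv_eq_sub]
  rfl

/-- approximate solutions, phrased through slopes. -/
def ASol (F : X m → Set (X m)) (ε : ℝ) (γ : ℝ → X m) (a b : ℝ) : Prop :=
  ∀ s t, a ≤ s → s < t → t ≤ b → ∀ D : Set (X m), Convex ℝ D → IsClosed D →
    (∀ u ∈ Icc s t, ∀ y, dist y (γ u) ≤ ε → F y ⊆ D) → (t - s)⁻¹ • (γ t - γ s) ∈ D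

lemma ASol.mono {F : X m → Set (X m)} {ε : ℝ} {γ : ℝ → X m} {a b c d : ℝ} (h : ASol F ε γ a b)
    (hc : a ≤ c) (hd : d ≤ b) : ASol F ε γ c d :=
  fun s t hs hst ht => h s t (hc.trans hs) hst (ht.trans hd)

lemma ASol.congr {F : X m → Set (X m)} {ε : ℝ} {γ γ' : ℝ → X m} {a b : ℝ} (h : ASol F ε γ a b)
    (he : EqOn γ γ' (Icc a b)) : ASol F ε γ' a b := by
  intro s t hs hst ht D hD hDc hsub
  rw [← he ⟨hs, hst.le.trans ht⟩, ← he ⟨hs.trans hst.le, ht⟩]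
  refine h s t hs hst ht D hD hDc fun u hu y hy => hsub u hu y ?_
  rwa [← he ⟨hs.trans hu.1, hu.2.trans ht⟩]

lemma ASol.shift {F : X m → Set (X m)} {ε : ℝ} {γ : ℝ → X m} {a b : ℝ} (h : ASol F ε γ a b)
    (c : ℝ) : ASol F ε (fun t => γ (t + c)) (a - c) (b - c) := by
  intro s t hs hst ht D hD hDc hsub
  have := h (s + c) (t + c) (by linarith) (by linarith) (by linarith) D hD hDc ?_
  · simpa using this
  · intro u hu y hy
    exact hsub (u - c) ⟨by linarith [hu.1], by linarith [hu.2]⟩ y (by simpa using hy)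

lemma slope_concat {D : Set (X m)} (hD : Convex ℝ D) {γ : ℝ → X m} {s r t : ℝ} (h1 : s < r) (h2 : r < t)
    (ha : (r - s)⁻¹ • (γ r - γ s) ∈ D) (hb : (t - r)⁻¹ • (γ t - γ r) ∈ D) :
    (t - s)⁻¹ • (γ t - γ s) ∈ D := by
  have p1 : 0 < r - s := by linarith
  have p2 : 0 < t - r := by linarith
  have p3 : 0 < t - s := by linarith
  have := hD ha hb (a := (r - s) / (t - s)) (b := (t - r) / (t - s)) (by positivity) (by positivity)
    (by field_simp; ring)
  convert this using 1
  rw [smul_smul, smul_smul]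
  have e1 : (r - s) / (t - s) * (r - s)⁻¹ = (t - s)⁻¹ := by field_simp
  have e2 : (t - r) / (t - s) * (t - r)⁻¹ = (t - s)⁻¹ := by field_simp
  rw [e1, e2, ← smul_add]
  congr 1
  abel

lemma ASol.glue {F : X m → Set (X m)} {ε : ℝ} {γ : ℝ → X m} {a b c : ℝ} (h1 : ASol F ε γ a b)
    (h2 : ASol F ε γ b c) : ASol F ε γ a c := by
  intro s t hs hst ht D hD hDc hsub
  rcases le_or_gt t b with htb | htb
  · exact h1 s t hs hst htb D hD hDc hsub
  rcases le_or_gt b s with hbs | hbs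
  · exact h2 s t hbs hst ht D hD hDc hsub
  refine slope_concat hD hbs htb ?_ ?_
  · exact h1 s b hs hbs le_rfl D hD hDc fun u hu => hsub u ⟨hu.1, hu.2.trans htb.le⟩
  · exact h2 b t le_rfl htb ht D hD hDc fun u hu => hsub u ⟨hbs.le.trans hu.1, hu.2⟩

/-- upper semicontinuous compact-valued maps are bounded on bounded sets. -/
lemma Standing.bdd {F : X m → Set (X m)} (hF : Standing F) (R : ℝ) :
    ∃ C > 0, ∀ x, ‖x‖ ≤ R → F x ⊆ closedBall 0 C := by
  have hK : IsCompact (closedBall (0 : X m) R) := isCompact_closedBall 0 R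
  have hloc : ∀ x ∈ closedBall (0 : X m) R, ∃ t ∈ 𝓝[closedBall (0 : X m) R] x,
      ∃ C : ℝ, ∀ y ∈ t, F y ⊆ closedBall 0 C := by
    intro x _
    obtain ⟨δ, hδ, h⟩ := hF.2 x 1 one_pos
    refine ⟨ball x δ, mem_nhdsWithin_of_mem_nhds (ball_mem_nhds x hδ), ?_⟩
    obtain ⟨C, hC⟩ := ((hF.1 x).2.2.isBounded.thickening (δ := 1)).subset_closedBall 0
    exact ⟨C, fun y hy => (h y hy).trans hC⟩
  have : ∃ C : ℝ, ∀ y ∈ closedBall (0 : X m) R, F y ⊆ closedBall 0 C := by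
    refine hK.induction_on (p := fun s => ∃ C : ℝ, ∀ y ∈ s, F y ⊆ closedBall 0 C) ⟨0, by simp⟩ ?_ ?_ hloc
    · rintro s t hst ⟨C, hC⟩
      exact ⟨C, fun y hy => hC y (hst hy)⟩
    · rintro s t ⟨C, hC⟩ ⟨C', hC'⟩
      refine ⟨max C C', fun y hy => ?_⟩
      rcases hy with hy | hy
      · exact (hC y hy).trans (closedBall_subset_closedBall (le_max_left _ _))
      · exact (hC' y hy).trans (closedBall_subset_closedBall (le_max_right _ _))
  obtain ⟨C, hC⟩ := this
  refine ⟨max C 1, by positivity, fun x hx => (hC x (by simpa using hx)).trans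
    (closedBall_subset_closedBall (le_max_left _ _))⟩

lemma ASol.dist_le {F : X m → Set (X m)} {ε C : ℝ} {γ : ℝ → X m} {a b : ℝ} (h : ASol F ε γ a b)
    (hC : ∀ u ∈ Icc a b, ∀ y, dist y (γ u) ≤ ε → F y ⊆ closedBall 0 C)
    {s t : ℝ} (hs : a ≤ s) (hst : s ≤ t) (ht : t ≤ b) : dist (γ t) (γ s) ≤ C * (t - s) := by
  rcases hst.eq_or_lt with rfl | hst
  · simp
  have := h s t hs hst ht _ (convex_closedBall 0 C) isClosed_closedBall
    fun u hu => hC u ⟨hs.trans hu.1, hu.2.trans ht⟩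
  rw [mem_closedBall, dist_zero_right, norm_smul, norm_inv, Real.norm_eq_abs,
    abs_of_pos (by linarith)] at this
  rw [dist_eq_norm]
  rwa [inv_mul_le_iff₀ (by linarith), mul_comm] at this

lemma IsSolOn.mono {F : X m → Set (X m)} {γ : ℝ → X m} {I J : Set ℝ} (h : IsSolOn F γ I) (hJ : J ⊆ I) :
    IsSolOn F γ J := by
  obtain ⟨g, h1, h2⟩ := h
  exact ⟨g, fun s hs t ht => h1 s (hJ hs) t (hJ ht), ae_mono (Measure.restrict_mono hJ le_rfl) h2⟩

lemma IsSolOn.asol {F : X m → Set (X m)} {γ : ℝ → X m} {a b : ℝ} (h : IsSolOn F γ (Icc a b)) :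
    ASol F 0 γ a b := by
  obtain ⟨g, h1, h2⟩ := h
  intro s t hs hst ht D hD hDc hsub
  obtain ⟨hi, he⟩ := h1 s ⟨hs, hst.le.trans ht⟩ t ⟨hs.trans hst.le, ht⟩
  have h3 : ∀ᵐ u ∂(volume.restrict (Ioc s t)), g u ∈ D := by
    have h4 : ∀ᵐ u ∂(volume.restrict (Ioc s t)), g u ∈ F (γ u) :=
      ae_mono (Measure.restrict_mono (show Ioc s t ⊆ Icc a b from
        fun u hu => ⟨hs.trans hu.1.le, hu.2.trans ht⟩) le_rfl) h2
    filter_upwards [h4, ae_restrict_mem measurableSet_Ioc] with u hu hu'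
    exact hsub u ⟨hu'.1.le, hu'.2⟩ (γ u) (by simp) hu
  have h5 := hD.set_average_mem hDc (μ := volume) (t := Ioc s t) (f := g)
    (by simp [hst]) (by simp) h3 ((intervalIntegrable_iff_integrableOn_Ioc_of_le hst.le).1 hi)
  rw [setAverage_eq, ← intervalIntegral.integral_of_le hst.le] at h5
  rw [he]
  simpa [Measure.real, Real.volume_Ioc, ENNReal.toReal_ofReal (sub_nonneg.2 hst.le)] using h5

lemma IsSolOn.continuousOn {F : X m → Set (X m)} {γ : ℝ → X m} {a b : ℝ} (h : IsSolOn F γ (Icc a b)) :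
    ContinuousOn γ (Icc a b) := by
  obtain ⟨g, h1, h2⟩ := h
  rcases le_or_gt a b with hab | hab
  · have := intervalIntegral.continuousOn_primitive_interval' (h1 a ⟨le_rfl, hab⟩ b ⟨hab, le_rfl⟩).1
      (left_mem_uIcc)
    rw [uIcc_of_le hab] at this
    exact (this.const_add (γ a)).congr fun t ht => (h1 a ⟨le_rfl, hab⟩ t ht).2
  · simp [Icc_eq_empty_of_lt hab]

/-- Closure theorem. -/
lemma closure_sol {F : X m → Set (X m)} (hF : Standing F) (𝒰 : Filter ℕ) [𝒰.NeBot]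
    {I : Set ℝ} (hI : I.OrdConnected) (R : ℝ) (ε : ℕ → ℝ) (hε : Tendsto ε 𝒰 (𝓝 0))
    (γ : ℕ → ℝ → X m) (Γ : ℝ → X m) (hlim : ∀ t ∈ I, Tendsto (fun n => γ n t) 𝒰 (𝓝 (Γ t)))
    (hsol : ∀ s ∈ I, ∀ t ∈ I, ∀ᶠ n in 𝒰, ASol F (ε n) (γ n) s t ∧ ∀ u ∈ Icc s t, ‖γ n u‖ ≤ R) :
    IsSolOn F Γ I := by
  obtain ⟨C, hC0, hC⟩ := hF.bdd (R + 1)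
  have hε1 : ∀ᶠ n in 𝒰, ε n < 1 := hε.eventually (gt_mem_nhds one_pos)
  -- approximate solutions are Lipschitz
  have hnl : ∀ s ∈ I, ∀ t ∈ I, ∀ᶠ n in 𝒰, ∀ u ∈ Icc s t, dist (γ n u) (γ n s) ≤ C * (u - s) := by
    intro s hs t ht
    filter_upwards [hsol s hs t ht, hε1] with n hn hn1 u hu
    refine hn.1.dist_le ?_ le_rfl hu.1 hu.2
    intro v hv y hy
    refine hC y ?_
    have h1 := hn.2 v hv
    have h2 : ‖y‖ ≤ ‖γ n v‖ + dist y (γ n v) := by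
      rw [dist_eq_norm]; simpa using norm_add_le (γ n v) (y - γ n v)
    linarith
  have hl1 : ∀ s ∈ I, ∀ t ∈ I, s ≤ t → dist (Γ t) (Γ s) ≤ C * (t - s) := by
    intro s hs t ht hst
    refine le_of_tendsto ((hlim t ht).dist (hlim s hs)) ?_
    filter_upwards [hnl s hs t ht] with n hn
    exact hn t ⟨hst, le_rfl⟩
  have hl2 : LipschitzOnWith C.toNNReal Γ I := by
    refine LipschitzOnWith.of_dist_le_mul fun x hx y hy => ?_
    rw [Real.coe_toNNReal C hC0.le]
    rcases le_total x y with h | h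
    · rw [dist_comm, dist_comm x y, Real.dist_eq, abs_of_nonneg (by linarith)]
      exact hl1 x hx y hy h
    · rw [Real.dist_eq, abs_of_nonneg (by linarith)]
      exact hl1 y hy x hx h
  obtain ⟨G, hG, hGe⟩ := hl2.extend_finite_dimension
  refine ⟨deriv G, fun s hs t ht => ?_, ?_⟩
  · rw [hGe hs, hGe ht]
    exact ftc_lip hG s t
  have hnull : volume {u | u ∈ I ∧ ∀ b ∈ I, b ≤ u} = 0 := by
    apply Set.Subsingleton.measure_zero
    rintro x ⟨hx, hx'⟩ y ⟨hy, hy'⟩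
    exact le_antisymm (hy' x hx) (hx' y hy)
  rw [ae_restrict_iff' hI.measurableSet]
  filter_upwards [hG.ae_differentiableAt_real, compl_mem_ae_iff.2 hnull] with t hd htn ht
  obtain ⟨b, hb, htb⟩ : ∃ b ∈ I, t < b := by
    by_contra hcon
    push Not at hcon
    exact htn ⟨ht, hcon⟩
  have hslope : Tendsto (fun s => (s - t)⁻¹ • (G s - G t)) (𝓝[>] t) (𝓝 (deriv G t)) := by
    have := hd.hasDerivAt.tendsto_slope
    exact this.mono_left (nhdsWithin_mono _ (fun s hs => (ne_of_gt hs)))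
  have hFc := (hF.1 (Γ t)).2.2.isClosed
  rw [← hFc.closure_eq, closure_eq_iInter_cthickening]
  simp only [mem_iInter]
  intro η hη
  obtain ⟨δ, hδ, hδF⟩ := hF.2 (Γ t) η hη
  refine isClosed_cthickening.mem_of_tendsto hslope ?_
  have hev1 : ∀ᶠ s in 𝓝[>] t, s < b := mem_nhdsWithin_of_mem_nhds (gt_mem_nhds htb)
  have hev2 : ∀ᶠ s in 𝓝[>] t, s < t + δ / (3 * C) :=
    mem_nhdsWithin_of_mem_nhds (gt_mem_nhds (by linarith [show 0 < δ / (3 * C) by positivity]))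
  filter_upwards [hev1, hev2, self_mem_nhdsWithin] with s hsb hsδ hst
  have hst : t < s := hst
  have hs : s ∈ I := hI.out ht hb ⟨hst.le, hsb.le⟩
  rw [← hGe ht, ← hGe hs]
  refine isClosed_cthickening.mem_of_tendsto (((hlim s hs).sub (hlim t ht)).const_smul _) ?_
  have hε3 : ∀ᶠ n in 𝒰, ε n < δ / 3 := hε.eventually (gt_mem_nhds (by positivity))
  have hd3 : ∀ᶠ n in 𝒰, dist (γ n t) (Γ t) < δ / 3 :=
    (hlim t ht).eventually (ball_mem_nhds _ (by positivity))
  filter_upwards [hnl t ht s hs, hε3, hd3, hsol t ht s hs] with n h1 h2 h3 h4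
  refine h4.1 t s le_rfl hst le_rfl _ ((hF.1 (Γ t)).2.1.cthickening η) isClosed_cthickening ?_
  intro u hu y hy
  refine (hδF y ?_).trans (thickening_subset_cthickening _ _)
  have h5 := h1 u hu
  have h6 : C * (u - t) ≤ δ / 3 := by
    have : u - t ≤ δ / (3 * C) := by linarith [hu.2]
    calc C * (u - t) ≤ C * (δ / (3 * C)) := by gcongr
      _ = δ / 3 := by field_simp
  have := dist_triangle y (γ n u) (Γ t)
  have := dist_triangle (γ n u) (γ n t) (Γ t)
  linarith

lemma isSolOn_iff {F : X m → Set (X m)} (hF : Standing F) {γ : ℝ → X m} {a b : ℝ} :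
    IsSolOn F γ (Icc a b) ↔ ContinuousOn γ (Icc a b) ∧ ASol F 0 γ a b := by
  refine ⟨fun h => ⟨h.continuousOn, h.asol⟩, fun ⟨h1, h2⟩ => ?_⟩
  obtain ⟨R, hR⟩ := (isCompact_Icc.image_of_continuousOn h1).isBounded.exists_norm_le
  refine closure_sol hF atTop ordConnected_Icc R (fun _ => 0) tendsto_const_nhds (fun _ => γ) γ
    (fun t _ => tendsto_const_nhds) fun s hs t ht => Eventually.of_forall fun n =>
    ⟨h2.mono hs.1 ht.2, fun u hu => hR _ ⟨u, ⟨hs.1.trans hu.1, hu.2.trans ht.2⟩, rfl⟩⟩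

/-- Compactness theorem (ultrafilter version). -/
lemma compact_sol {F : X m → Set (X m)} (hF : Standing F) (𝒰 : Ultrafilter ℕ)
    {I : Set ℝ} (hI : I.OrdConnected) {K : Set (X m)} (hK : IsCompact K)
    (ε : ℕ → ℝ) (hε : Tendsto ε 𝒰 (𝓝 0)) (γ : ℕ → ℝ → X m)
    (hsol : ∀ s ∈ I, ∀ t ∈ I, ∀ᶠ n in (𝒰 : Filter ℕ), ASol F (ε n) (γ n) s t ∧ ∀ u ∈ Icc s t, γ n u ∈ K) :
    ∃ Γ : ℝ → X m, IsSolOn F Γ I ∧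
      ∀ t ∈ I, Γ t ∈ K ∧ Tendsto (fun n => γ n t) 𝒰 (𝓝 (Γ t)) := by
  have hex : ∀ t, ∃ y, t ∈ I → y ∈ K ∧ Tendsto (fun n => γ n t) 𝒰 (𝓝 y) := by
    intro t
    by_cases ht : t ∈ I
    · have h1 : ∀ᶠ n in (𝒰 : Filter ℕ), γ n t ∈ K :=
        (hsol t ht t ht).mono fun n hn => hn.2 t ⟨le_rfl, le_rfl⟩
      obtain ⟨y, hy, hy'⟩ := hK.ultrafilter_le_nhds (𝒰.map fun n => γ n t)
        (by rw [le_principal_iff]; exact h1)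
      exact ⟨y, fun _ => ⟨hy, hy'⟩⟩
    · exact ⟨0, fun h => absurd h ht⟩
  choose Γ hΓ using hex
  obtain ⟨R, hR⟩ := hK.isBounded.exists_norm_le
  refine ⟨Γ, closure_sol hF 𝒰 hI R ε hε γ Γ (fun t ht => (hΓ t ht).2) ?_, hΓ⟩
  intro s hs t ht
  filter_upwards [hsol s hs t ht] with n hn
  exact ⟨hn.1, fun u hu => hR _ (hn.2 u hu)⟩


/-- Solutions on `[a,b]` in slope form. -/
def SS (F : X m → Set (X m)) (γ : ℝ → X m) (a b : ℝ) : Prop :=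
  ContinuousOn γ (Icc a b) ∧ ASol F 0 γ a b

lemma SS.mono {F : X m → Set (X m)} {γ : ℝ → X m} {a b c d : ℝ} (h : SS F γ a b)
    (hc : a ≤ c) (hd : d ≤ b) : SS F γ c d :=
  ⟨h.1.mono (Icc_subset_Icc hc hd), h.2.mono hc hd⟩

lemma SS.congr {F : X m → Set (X m)} {γ γ' : ℝ → X m} {a b : ℝ} (h : SS F γ a b)
    (he : EqOn γ γ' (Icc a b)) : SS F γ' a b :=
  ⟨h.1.congr he.symm, h.2.congr he⟩

lemma SS.shift {F : X m → Set (X m)} {γ : ℝ → X m} {a b : ℝ} (h : SS F γ a b)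
    (c : ℝ) : SS F (fun t => γ (t + c)) (a - c) (b - c) :=
  ⟨h.1.comp (by fun_prop) fun t ht => ⟨by linarith [ht.1], by linarith [ht.2]⟩, h.2.shift c⟩

lemma SS.glue {F : X m → Set (X m)} {γ : ℝ → X m} {a b c : ℝ} (h1 : SS F γ a b)
    (h2 : SS F γ b c) (hab : a ≤ b) (hbc : b ≤ c) : SS F γ a c := by
  refine ⟨?_, h1.2.glue h2.2⟩
  rw [← Icc_union_Icc_eq_Icc hab hbc]
  exact h1.1.union_of_isClosed h2.1 isClosed_Icc isClosed_Icc

lemma SS.concat {F : X m → Set (X m)} {γ₁ γ₂ : ℝ → X m} {a b c : ℝ} (h1 : SS F γ₁ a b)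
    (h2 : SS F γ₂ b c) (hab : a ≤ b) (hbc : b ≤ c) (he : γ₁ b = γ₂ b) :
    SS F (fun t => if t ≤ b then γ₁ t else γ₂ t) a c := by
  refine SS.glue (h1.congr ?_) (h2.congr ?_) hab hbc
  · intro t ht
    simp [ht.2]
  · intro t ht
    rcases ht.1.eq_or_lt with rfl | h
    · simp [he]
    · simp [not_le.2 h]

lemma mem_reach_iff {F : X m → Set (X m)} (hF : Standing F) {t : ℝ} {x y : X m} :
    y ∈ reach F t x ↔ ∃ γ, SS F γ 0 t ∧ γ 0 = x ∧ γ t = y := by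
  simp only [reach, mem_ofPred_eq, isSolOn_iff hF, SS]

lemma SS.reach {F : X m → Set (X m)} (hF : Standing F) {γ : ℝ → X m} {a b s t : ℝ} (h : SS F γ a b)
    (hs : a ≤ s) (ht : t ≤ b) : γ t ∈ reach F (t - s) (γ s) := by
  rw [mem_reach_iff hF]
  refine ⟨fun u => γ (u + s), ?_, by simp, by simp⟩
  simpa using (h.mono hs ht).shift s

lemma reach_trans {F : X m → Set (X m)} (hF : Standing F) {s t : ℝ} {x y z : X m} (hs : 0 ≤ s)
    (ht : 0 ≤ t) (h1 : y ∈ reach F s x) (h2 : z ∈ reach F t y) : z ∈ reach F (s + t) x := by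
  rw [mem_reach_iff hF] at h1 h2 ⊢
  obtain ⟨γ₁, a1, a2, a3⟩ := h1
  obtain ⟨γ₂, b1, b2, b3⟩ := h2
  have b4 := b1.shift (-s)
  have e1 : (0 : ℝ) - -s = s := by ring
  have e2 : t - -s = s + t := by ring
  rw [e1, e2] at b4
  refine ⟨_, a1.concat b4 hs (by linarith) ?_, ?_, ?_⟩
  · simp [a3, b2]
  · simp [hs, a2]
  · rcases ht.eq_or_lt with rfl | h
    · simp [a3, ← b3, b2]
    · simp [not_le.2 h, b3]

lemma reach_split {F : X m → Set (X m)} (hF : Standing F) {s t : ℝ} {x z : X m} (hs : 0 ≤ s)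
    (ht : 0 ≤ t) (h : z ∈ reach F (s + t) x) : ∃ y ∈ reach F s x, z ∈ reach F t y := by
  rw [mem_reach_iff hF] at h
  obtain ⟨γ, a1, a2, a3⟩ := h
  refine ⟨γ s, ?_, ?_⟩
  · have := a1.reach hF (s := 0) (t := s) le_rfl (by linarith)
    rwa [a2, sub_zero] at this
  · have := a1.reach hF (s := s) (t := s + t) hs le_rfl
    rwa [a3, add_sub_cancel_left] at this

lemma hyper_tendsto {α : Type*} {f : ℕ → α} {l : Filter α} (h : Tendsto f atTop l) :
    Tendsto f (hyperfilter ℕ : Filter ℕ) l := h.mono_left Nat.hyperfilter_le_atTop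

/-- Uniform local existence. -/
lemma local_exist {F : X m → Set (X m)} (hF : Standing F) (R : ℝ) :
    ∃ τ > 0, ∀ x : X m, ‖x‖ ≤ R → ∃ γ, SS F γ 0 τ ∧ γ 0 = x := by
  obtain ⟨C, hC0, hC⟩ := hF.bdd (R + 2)
  refine ⟨1 / C, by positivity, fun x hx => ?_⟩
  have key : ∀ n : ℕ, ∀ k : ℕ, k ≤ n + 1 → ∃ γ : ℝ → X m, γ 0 = x ∧
      ASol F (1 / ((n : ℝ) + 1)) γ 0 (k * (1 / C / (n + 1))) ∧
      ∀ u ∈ Icc 0 (k * (1 / C / ((n : ℝ) + 1))), ‖γ u - x‖ ≤ C * u := by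
    intro n k
    have hn : (0 : ℝ) < n + 1 := by positivity
    have hhd : ∃ h : ℝ, h = 1 / C / ((n : ℝ) + 1) := ⟨_, rfl⟩
    obtain ⟨h, hh⟩ := hhd
    rw [← hh]
    have hh0 : 0 < h := by rw [hh]; positivity
    have hCh : C * h = 1 / ((n : ℝ) + 1) := by rw [hh]; field_simp
    have hnh : C * (((n : ℝ) + 1) * h) = 1 := by rw [hh]; field_simp
    induction k with
    | zero =>
      intro _
      refine ⟨fun _ => x, rfl, ?_, ?_⟩
      · intro s t hs hst ht
        simp only [Nat.cast_zero, zero_mul] at ht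
        linarith
      · intro u hu
        simp only [sub_self, norm_zero]
        exact mul_nonneg hC0.le hu.1
    | succ k ih =>
      intro hk
      obtain ⟨γ, g0, g1, g2⟩ := ih (by omega)
      have hk' : (k : ℝ) ≤ n + 1 := by exact_mod_cast (show k ≤ n + 1 by omega)
      have hkh : 0 ≤ k * h := by positivity
      have hb : ‖γ (k * h) - x‖ ≤ 1 := by
        refine (g2 _ ⟨hkh, le_rfl⟩).trans ?_
        rw [← hnh]
        gcongr
      obtain ⟨v, hv⟩ := (hF.1 (γ (k * h))).1
      have hvC : ‖v‖ ≤ C := by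
        have h1 : ‖γ (k * h)‖ ≤ R + 2 := by
          have := norm_add_le (γ (k * h) - x) x
          simp only [sub_add_cancel] at this
          linarith
        simpa using hC _ h1 hv
      have eR : ∀ t, k * h ≤ t → (if t ≤ k * h then γ t else γ (k * h) + (t - k * h) • v) =
          γ (k * h) + (t - k * h) • v := by
        intro t ht
        rcases ht.eq_or_lt with h | h
        · simp [← h]
        · simp [not_le.2 h]
      refine ⟨fun t => if t ≤ k * h then γ t else γ (k * h) + (t - k * h) • v, ?_, ?_, ?_⟩
      · simp [hkh, g0]
      · refine ASol.glue (b := k * h) (g1.congr fun t ht => by simp [ht.2]) ?_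
        intro s t hs hst ht D hD hDc hsub
        have hts : 0 < t - s := by linarith
        have e : (t - s)⁻¹ • ((γ (k * h) + (t - k * h) • v) - (γ (k * h) + (s - k * h) • v)) = v := by
          rw [add_sub_add_left_eq_sub, ← sub_smul, smul_smul]
          have : (t - s)⁻¹ * (t - k * h - (s - k * h)) = 1 := by field_simp; ring
          rw [this, one_smul]
        simp only [eR s hs, eR t (hs.trans hst.le), e]
        refine hsub s ⟨le_rfl, hst.le⟩ (γ (k * h)) ?_ hv
        simp only [eR s hs]
        rw [dist_self_add_right, norm_smul, Real.norm_eq_abs, abs_of_nonneg (by linarith), ← hCh]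
        have : s - k * h ≤ h := by
          push_cast at ht
          linarith
        nlinarith [norm_nonneg v]
      · intro u hu
        rcases le_or_gt u (k * h) with huk | huk
        · simp only [huk, if_true]
          exact g2 u ⟨hu.1, huk⟩
        · simp only [eR u huk.le]
          have h1 := g2 _ ⟨hkh, le_rfl⟩
          have h2 : ‖(u - k * h) • v‖ ≤ C * (u - k * h) := by
            rw [norm_smul, Real.norm_eq_abs, abs_of_nonneg (by linarith), mul_comm]
            gcongr
          have h3 : γ (k * h) + (u - k * h) • v - x = (γ (k * h) - x) + (u - k * h) • v := by abel
          rw [h3]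
          refine (norm_add_le _ _).trans ?_
          linarith
  choose γ g0 g1 g2 using fun n : ℕ => key n (n + 1) le_rfl
  have et : ∀ n : ℕ, ((n + 1 : ℕ) : ℝ) * (1 / C / ((n : ℝ) + 1)) = 1 / C := by
    intro n
    push_cast
    field_simp
  simp only [et] at g1 g2
  obtain ⟨Γ, hΓ, hΓ'⟩ := compact_sol hF (hyperfilter ℕ) (I := Icc 0 (1 / C)) ordConnected_Icc
    (isCompact_closedBall x 1) (fun n => 1 / ((n : ℝ) + 1))
    (hyper_tendsto tendsto_one_div_add_atTop_nhds_zero_nat) γ (by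
      intro s hs t ht
      refine Eventually.of_forall fun n => ⟨(g1 n).mono hs.1 ht.2, fun u hu => ?_⟩
      have hu1 : u ≤ 1 / C := hu.2.trans ht.2
      rw [mem_closedBall, dist_eq_norm]
      refine (g2 n u ⟨hs.1.trans hu.1, hu1⟩).trans ?_
      calc C * u ≤ C * (1 / C) := by gcongr
        _ = 1 := by field_simp)
  refine ⟨Γ, (isSolOn_iff hF).1 hΓ, ?_⟩
  have h0 := (hΓ' 0 ⟨le_rfl, by positivity⟩).2
  simp only [g0] at h0
  exact tendsto_nhds_unique h0 tendsto_const_nhds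

lemma forward_exist {F : X m → Set (X m)} (hF : Standing F) {A : Set (X m)} (hA : IsCompact A)
    (hP : PosInvariant F A) {x : X m} (hx : x ∈ A) (t : ℝ) : ∃ γ, SS F γ 0 t ∧ γ 0 = x := by
  obtain ⟨R, hR⟩ := hA.isBounded.exists_norm_le
  obtain ⟨τ, hτ, hloc⟩ := local_exist hF R
  have key : ∀ n : ℕ, ∃ γ, SS F γ 0 (n * τ) ∧ γ 0 = x := by
    intro n
    induction n with
    | zero =>
      obtain ⟨γ, h1, h2⟩ := hloc x (hR x hx)
      exact ⟨γ, h1.mono le_rfl (by simpa using hτ.le), h2⟩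
    | succ n ih =>
      obtain ⟨γ, h1, h2⟩ := ih
      have hn : 0 ≤ n * τ := by positivity
      have hmem : γ (n * τ) ∈ A := by
        refine hP (n * τ) hn ?_
        refine mem_biUnion hx ?_
        have := h1.reach hF (s := 0) (t := n * τ) le_rfl le_rfl
        rwa [h2, sub_zero] at this
      obtain ⟨σ, s1, s2⟩ := hloc _ (hR _ hmem)
      have s3 := s1.shift (-(n * τ))
      have e1 : (0 : ℝ) - -(n * τ) = n * τ := by ring
      have e2 : τ - -(n * τ) = (n + 1 : ℕ) * τ := by push_cast; ring
      rw [e1, e2] at s3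
      refine ⟨_, h1.concat s3 hn (by push_cast; linarith) (by simp [s2]), ?_⟩
      simp [hn, h2]
  obtain ⟨n, hn⟩ := exists_nat_ge (t / τ)
  obtain ⟨γ, h1, h2⟩ := key n
  exact ⟨γ, h1.mono le_rfl ((div_le_iff₀ hτ).1 hn), h2⟩

lemma mem_omega_iff {F : X m → Set (X m)} {B : Set (X m)} {y : X m} :
    y ∈ omegaLim F B ↔ ∀ ε > 0, ∀ T : ℝ, ∃ t ≥ T, ∃ p ∈ reachSet F t B, dist p y < ε := by
  constructor
  · rintro ⟨t, p, ht, hp, hl⟩ ε hε T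
    obtain ⟨n, h1, h2⟩ := ((ht.eventually_ge_atTop T).and
      (hl.eventually (ball_mem_nhds y hε))).exists
    exact ⟨t n, h1, p n, hp n, h2⟩
  · intro h
    choose t ht p hp hd using fun n : ℕ => h (1 / ((n : ℝ) + 1)) (by positivity) n
    refine ⟨t, p, tendsto_atTop_mono ht tendsto_natCast_atTop_atTop, hp, ?_⟩
    rw [tendsto_iff_dist_tendsto_zero]
    exact squeeze_zero (fun _ => dist_nonneg) (fun n => (hd n).le)
      tendsto_one_div_add_atTop_nhds_zero_nat

lemma reachSet_mono {F : X m → Set (X m)} {B C : Set (X m)} (h : B ⊆ C) (t : ℝ) :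
    reachSet F t B ⊆ reachSet F t C := biUnion_subset_biUnion_left h

lemma omega_mono {F : X m → Set (X m)} {B C : Set (X m)} (h : B ⊆ C) :
    omegaLim F B ⊆ omegaLim F C := by
  rintro y ⟨t, p, ht, hp, hl⟩
  exact ⟨t, p, ht, fun n => reachSet_mono h _ (hp n), hl⟩

/-- ultrafilter limits of points reached at large times are in the limit set. -/
lemma omega_of_tendsto {F : X m → Set (X m)} {B : Set (X m)} {y : X m} {𝒰 : Filter ℕ} [𝒰.NeBot]
    {t : ℕ → ℝ} {p : ℕ → X m} (ht : Tendsto t 𝒰 atTop)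
    (hp : ∀ᶠ n in 𝒰, p n ∈ reachSet F (t n) B) (hl : Tendsto p 𝒰 (𝓝 y)) : y ∈ omegaLim F B := by
  rw [mem_omega_iff]
  intro ε hε T
  obtain ⟨n, h1, h2, h3⟩ := ((ht.eventually_ge_atTop T).and
      (hp.and (hl.eventually (ball_mem_nhds y hε)))).exists
  exact ⟨t n, h1, p n, h2, h3⟩

/-- ultrafilter limits exist in compact sets, giving points in limit sets. -/
lemma omega_cluster {F : X m → Set (X m)} {B K : Set (X m)} (hK : IsCompact K)
    {t : ℕ → ℝ} {p : ℕ → X m} (ht : Tendsto t atTop atTop)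
    (hp : ∀ n, p n ∈ reachSet F (t n) B) (hpK : ∀ n, p n ∈ K) : (omegaLim F B ∩ K).Nonempty := by
  obtain ⟨y, hy, hy'⟩ := hK.ultrafilter_le_nhds ((hyperfilter ℕ).map p)
    (by rw [le_principal_iff]; exact (Eventually.of_forall hpK :
      ∀ᶠ n in (hyperfilter ℕ : Filter ℕ), p n ∈ K))
  exact ⟨y, omega_of_tendsto (hyper_tendsto ht) (Eventually.of_forall hp) hy', hy⟩


/-- a backward solution through `x` inside `A`. -/
def Back (F : X m → Set (X m)) (A : Set (X m)) (x : X m) (γ : ℝ → X m) : Prop :=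
  (∀ a, a ≤ 0 → SS F γ a 0) ∧ γ 0 = x ∧ ∀ t, t ≤ 0 → γ t ∈ A

def Inv (F : X m → Set (X m)) (A : Set (X m)) : Prop :=
  IsCompact A ∧ PosInvariant F A ∧ ∀ x ∈ A, ∃ γ, Back F A x γ

lemma mem_reachSet {F : X m → Set (X m)} {A : Set (X m)} {t : ℝ} {x y : X m} (hx : x ∈ A)
    (h : y ∈ reach F t x) : y ∈ reachSet F t A := mem_biUnion hx h

lemma SS.mem {F : X m → Set (X m)} (hF : Standing F) {A : Set (X m)} (hP : PosInvariant F A)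
    {γ : ℝ → X m} {a b : ℝ} (h : SS F γ a b) (ha : γ a ∈ A) {u : ℝ} (hu : u ∈ Icc a b) : γ u ∈ A :=
  hP (u - a) (by linarith [hu.1]) (mem_reachSet ha (h.reach hF le_rfl hu.2))

lemma back_of_omega {F : X m → Set (X m)} (hF : Standing F) {B K : Set (X m)} (hK : IsCompact K)
    {t : ℕ → ℝ} (ht : Tendsto t atTop atTop) {γ : ℕ → ℝ → X m} (hγ : ∀ n, SS F (γ n) 0 (t n))
    (h0 : ∀ n, γ n 0 ∈ B) (T : ℝ) (hT0 : 0 ≤ T)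
    (hT : ∀ᶠ n in atTop, ∀ s ∈ Icc T (t n), γ n s ∈ K)
    {y : X m} (hy : Tendsto (fun n => γ n (t n)) atTop (𝓝 y)) :
    ∃ σ, Back F (omegaLim F B) y σ := by
  have hT' := hT.filter_mono Nat.hyperfilter_le_atTop
  have ht' := hyper_tendsto ht
  obtain ⟨Γ, hΓ, hΓ'⟩ := compact_sol hF (hyperfilter ℕ) (I := Iic 0) ordConnected_Iic hK
    (fun n => 0) tendsto_const_nhds (fun n u => γ n (u + t n)) (by
      intro a ha b hb
      filter_upwards [hT', ht'.eventually_ge_atTop (T - a)] with n h1 h2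
      have hb : b ≤ 0 := hb
      refine ⟨((hγ n).shift (t n)).2.mono (by linarith) (by linarith), fun u hu => ?_⟩
      exact h1 _ ⟨by linarith [hu.1], by linarith [hu.2]⟩)
  refine ⟨Γ, fun a ha => (isSolOn_iff hF).1 (hΓ.mono Icc_subset_Iic_self), ?_, ?_⟩
  · have := (hΓ' 0 (by simp)).2
    simp only [zero_add] at this
    exact tendsto_nhds_unique this (hyper_tendsto hy)
  · intro s hs
    refine omega_of_tendsto (t := fun n => s + t n) (tendsto_atTop_add_const_left _ _ ht') ?_ (hΓ' s hs).2
    filter_upwards [ht'.eventually_ge_atTop (- s)] with n hn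
    have := (hγ n).reach hF (s := 0) (t := s + t n) le_rfl (by linarith)
    rw [sub_zero] at this
    exact mem_reachSet (h0 n) this

lemma posInv_of_back {F : X m → Set (X m)} (hF : Standing F) {A B : Set (X m)} (hAB : A ⊆ B)
    (hω : omegaLim F B = A) (hb : ∀ x ∈ A, ∃ γ, Back F A x γ) : PosInvariant F A := by
  intro t ht y hy
  simp only [reachSet, mem_iUnion] at hy
  obtain ⟨x, hx, hy⟩ := hy
  obtain ⟨γ, h1, h2, h3⟩ := hb x hx
  rw [← hω, mem_omega_iff]
  intro ε hε T
  have hs : 0 ≤ max T 0 := le_max_right _ _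
  refine ⟨max T 0 + t, by linarith [le_max_left T 0], y, ?_, by simpa using hε⟩
  refine mem_reachSet (hAB (h3 (-(max T 0)) (by linarith))) ?_
  refine reach_trans hF hs ht ?_ hy
  have := (h1 (-(max T 0)) (by linarith)).reach hF (s := -(max T 0)) (t := 0) le_rfl le_rfl
  simpa [h2] using this

lemma omega_data {F : X m → Set (X m)} (hF : Standing F) {B : Set (X m)} {y : X m}
    (hy : y ∈ omegaLim F B) : ∃ (t : ℕ → ℝ) (γ : ℕ → ℝ → X m), Tendsto t atTop atTop ∧
      (∀ n, SS F (γ n) 0 (t n)) ∧ (∀ n, γ n 0 ∈ B) ∧ Tendsto (fun n => γ n (t n)) atTop (𝓝 y) := by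
  obtain ⟨t, p, ht, hp, hl⟩ := hy
  have : ∀ n, ∃ γ, SS F γ 0 (t n) ∧ γ 0 ∈ B ∧ γ (t n) = p n := by
    intro n
    have := hp n
    simp only [reachSet, mem_iUnion] at this
    obtain ⟨x, hx, h⟩ := this
    obtain ⟨γ, h1, h2, h3⟩ := (mem_reach_iff hF).1 h
    exact ⟨γ, h1, h2 ▸ hx, h3⟩
  choose γ h1 h2 h3 using this
  exact ⟨t, γ, ht, h1, h2, by simpa only [h3] using hl⟩

lemma inv_of_attractorIn {F : X m → Set (X m)} (hF : Standing F) {𝒜 A : Set (X m)} (h𝒜 : Inv F 𝒜)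
    (hA : IsAttractorIn F 𝒜 A) : Inv F A := by
  obtain ⟨hc, hs, U, hU, hω⟩ := hA
  have hback : ∀ x ∈ A, ∃ γ, Back F A x γ := by
    intro x hx
    rw [← hω] at hx
    obtain ⟨t, γ, ht, h1, h2, h3⟩ := omega_data hF hx
    have := back_of_omega hF h𝒜.1 ht h1 h2 0 le_rfl
      (Eventually.of_forall fun n s hs => (h1 n).mem hF h𝒜.2.1 (h2 n).2 hs) h3
    rwa [hω] at this
  exact ⟨hc, posInv_of_back hF (subset_inter (hU.trans interior_subset) hs) hω hback, hback⟩

lemma inv_of_attractor {F : X m → Set (X m)} (hF : Standing F) {𝒜 : Set (X m)}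
    (h𝒜 : IsAttractor F 𝒜) : Inv F 𝒜 := by
  obtain ⟨hc, U, hU, hω⟩ := h𝒜
  have hback : ∀ x ∈ 𝒜, ∃ γ, Back F 𝒜 x γ := by
    intro x hx
    have hne : 𝒜.Nonempty := ⟨x, hx⟩
    have hK : IsCompact (cthickening 1 𝒜) := hc.cthickening
    -- after some time no solution starting in `U` crosses the level set
    have hT : ∃ T : ℝ, ∀ t ≥ T, ∀ p ∈ reachSet F t U, infDist p 𝒜 ≠ 1 := by
      by_contra hcon
      push Not at hcon
      choose t ht p hp hd using fun n : ℕ => hcon n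
      obtain ⟨y, hy, hy'⟩ := omega_cluster (K := cthickening 1 𝒜 ∩ {z | infDist z 𝒜 = 1})
        (hK.inter_right (isClosed_eq (continuous_infDist_pt 𝒜) continuous_const))
        (tendsto_atTop_mono ht tendsto_natCast_atTop_atTop) hp
        (fun n => ⟨by rw [cthickening_eq_preimage_infEDist]
                      rw [mem_preimage, mem_Iic, ← ENNReal.ofReal_toReal (infEDist_ne_top hne)]
                      exact ENNReal.ofReal_le_ofReal (hd n).le, hd n⟩)
      rw [hω] at hy
      have h0 := infDist_zero_of_mem hy
      have h1 : infDist y 𝒜 = 1 := hy'.2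
      linarith
    obtain ⟨T, hT⟩ := hT
    rw [← hω] at hx
    obtain ⟨t, γ, ht, h1, h2, h3⟩ := omega_data hF hx
    rw [hω] at hx
    have := back_of_omega hF hK ht h1 h2 (max T 0) (le_max_right _ _) ?_ h3
    · rwa [hω] at this
    have hev : ∀ᶠ n in atTop, infDist (γ n (t n)) 𝒜 < 1 := by
      have h4 := ((continuous_infDist_pt 𝒜).tendsto x).comp h3
      rw [infDist_zero_of_mem hx] at h4
      exact h4.eventually (gt_mem_nhds one_pos)
    filter_upwards [hev] with n hn s hs
    have hs0 : 0 ≤ s := (le_max_right _ _).trans hs.1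
    suffices infDist (γ n s) 𝒜 ≤ 1 by
      rw [cthickening_eq_preimage_infEDist, mem_preimage, mem_Iic,
        ← ENNReal.ofReal_toReal (infEDist_ne_top hne)]
      exact ENNReal.ofReal_le_ofReal this
    by_contra hlt
    push Not at hlt
    have hcont : ContinuousOn (fun u => infDist (γ n u) 𝒜) (Icc s (t n)) :=
      (continuous_infDist_pt 𝒜).comp_continuousOn ((h1 n).1.mono (Icc_subset_Icc hs0 le_rfl))
    obtain ⟨u, hu, hu'⟩ := intermediate_value_Icc' hs.2 hcont ⟨hn.le, hlt.le⟩
    refine hT u (((le_max_left _ _).trans hs.1).trans hu.1) (γ n u) ?_ hu'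
    have := (h1 n).reach hF (s := 0) (t := u) le_rfl hu.2
    rw [sub_zero] at this
    exact mem_reachSet (h2 n) this
  exact ⟨hc, posInv_of_back hF (hU.trans interior_subset) hω hback, hback⟩

lemma glue_complete {F : X m → Set (X m)} (hF : Standing F) {A : Set (X m)} (hA : Inv F A) {x : X m}
    (hx : x ∈ A) {σ : ℝ → X m} (hσ : Back F A x σ) {t : ℕ → ℝ} (ht : Tendsto t atTop atTop)
    {γ : ℕ → ℝ → X m} (h1 : ∀ n, SS F (γ n) 0 (t n)) (h2 : ∀ n, γ n 0 = x) :
    ∃ Γ, IsSolOn F Γ univ ∧ range Γ ⊆ A ∧ Γ 0 = x ∧ (∀ s ≤ 0, Γ s = σ s) ∧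
      ∀ s, 0 ≤ s → Tendsto (fun n => γ n s) (hyperfilter ℕ : Filter ℕ) (𝓝 (Γ s)) := by
  obtain ⟨s1, s2, s3⟩ := hσ
  obtain ⟨Γ, hΓ, hΓ'⟩ := compact_sol hF (hyperfilter ℕ) (I := univ) ordConnected_univ hA.1
    (fun n => 0) tendsto_const_nhds (fun n u => if u ≤ 0 then σ u else γ n u) (by
      intro a _ b _
      filter_upwards [(hyper_tendsto ht).eventually_ge_atTop (max b 0)] with n hn
      have hn0 : 0 ≤ t n := (le_max_right _ _).trans hn
      have hnb : b ≤ t n := (le_max_left _ _).trans hn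
      have hS := (s1 (min a 0) (min_le_right _ _)).concat (h1 n) (min_le_right _ _) hn0
        (by rw [s2, h2])
      refine ⟨(hS.mono (min_le_left _ _) hnb).2, fun u hu => ?_⟩
      refine hS.mem hF hA.2.1 ?_ ⟨(min_le_left _ _).trans hu.1, hu.2.trans hnb⟩
      simp only [min_le_right, if_true]
      exact s3 _ (min_le_right _ _))
  have hle : ∀ s ≤ 0, Γ s = σ s := by
    intro s hs
    have := (hΓ' s trivial).2
    simp only [hs, if_true] at this
    exact tendsto_nhds_unique this tendsto_const_nhds
  refine ⟨Γ, hΓ, ?_, ?_, hle, ?_⟩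
  · rintro _ ⟨s, rfl⟩
    exact (hΓ' s trivial).1
  · rw [hle 0 le_rfl, s2]
  · intro s hs
    have := (hΓ' s trivial).2
    rcases hs.eq_or_lt with rfl | hs
    · simpa [h2, s2] using this
    · simpa [not_le.2 hs] using this

lemma exists_complete {F : X m → Set (X m)} (hF : Standing F) {A : Set (X m)} (hA : Inv F A) {x : X m}
    (hx : x ∈ A) : ∃ Γ, IsSolOn F Γ univ ∧ range Γ ⊆ A ∧ Γ 0 = x := by
  obtain ⟨σ, hσ⟩ := hA.2.2 x hx
  choose γ h1 h2 using fun n : ℕ => forward_exist hF hA.1 hA.2.1 hx (n : ℝ)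
  obtain ⟨Γ, a, b, c, _⟩ := glue_complete hF hA hx hσ tendsto_natCast_atTop_atTop h1 h2
  exact ⟨Γ, a, b, c⟩

lemma reachSet_singleton {F : X m → Set (X m)} {t : ℝ} {x : X m} :
    reachSet F t {x} = reach F t x := by simp [reachSet]

lemma PosInvariant.mem {F : X m → Set (X m)} {A : Set (X m)} (hP : PosInvariant F A) {t : ℝ}
    (ht : 0 ≤ t) {x y : X m} (hx : x ∈ A) (h : y ∈ reach F t x) : y ∈ A :=
  hP t ht (mem_reachSet hx h)

lemma basin_open {F : X m → Set (X m)} (hF : Standing F) {𝒜 A : Set (X m)} (h𝒜 : Inv F 𝒜)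
    (hA : IsAttractorIn F 𝒜 A) {x : X m} (hx : x ∈ 𝒜) (hω : omegaLim F {x} ⊆ A) :
    ∃ V ∈ 𝓝 x, omegaLim F (V ∩ 𝒜) ⊆ A := by
  obtain ⟨-, -, U, hU, hωU⟩ := hA
  have hT : ∃ T : ℝ, 0 ≤ T ∧ reach F T x ⊆ interior U := by
    by_contra hcon
    push Not at hcon
    have h1 : ∀ n : ℕ, ∃ p ∈ reach F n x, p ∉ interior U := fun n =>
      not_subset.1 (hcon n (Nat.cast_nonneg n))
    choose p hp hp' using h1
    obtain ⟨y, hy, hy'⟩ := omega_cluster (B := {x}) (K := 𝒜 ∩ (interior U)ᶜ)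
      (h𝒜.1.inter_right isOpen_interior.isClosed_compl) tendsto_natCast_atTop_atTop
      (fun n => by rw [reachSet_singleton]; exact hp n)
      (fun n => ⟨h𝒜.2.1.mem (Nat.cast_nonneg n) hx (hp n), hp' n⟩)
    exact hy'.2 (hU (hω hy))
  obtain ⟨T, hT0, hT⟩ := hT
  have hV : ∃ V ∈ 𝓝 x, ∀ z ∈ V ∩ 𝒜, reach F T z ⊆ interior U := by
    by_contra hcon
    push Not at hcon
    have h1 : ∀ n : ℕ, ∃ γ, SS F γ 0 T ∧ γ 0 ∈ ball x (1 / ((n : ℝ) + 1)) ∩ 𝒜 ∧ γ T ∉ interior U := by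
      intro n
      obtain ⟨z, hz, hz'⟩ := hcon (ball x (1 / ((n : ℝ) + 1))) (ball_mem_nhds x (by positivity))
      obtain ⟨p, hp, hp'⟩ := not_subset.1 hz'
      obtain ⟨γ, a, b, c⟩ := (mem_reach_iff hF).1 hp
      exact ⟨γ, a, b ▸ hz, c ▸ hp'⟩
    choose γ a b c using h1
    obtain ⟨Γ, hΓ, hΓ'⟩ := compact_sol hF (hyperfilter ℕ) (I := Icc 0 T) ordConnected_Icc h𝒜.1
      (fun n => 0) tendsto_const_nhds γ (fun s hs t ht => Eventually.of_forall fun n =>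
        ⟨((a n).mono hs.1 ht.2).2, fun u hu => (a n).mem hF h𝒜.2.1 (b n).2
          ⟨hs.1.trans hu.1, hu.2.trans ht.2⟩⟩)
    have e0 : Γ 0 = x := by
      refine tendsto_nhds_unique (hΓ' 0 ⟨le_rfl, hT0⟩).2 (hyper_tendsto ?_)
      rw [tendsto_iff_dist_tendsto_zero]
      exact squeeze_zero (fun _ => dist_nonneg) (fun n => (mem_ball.1 (b n).1).le)
        tendsto_one_div_add_atTop_nhds_zero_nat
    have e1 : Γ T ∈ interior U := hT ⟨Γ, hΓ, e0, rfl⟩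
    obtain ⟨n, hn⟩ := ((hΓ' T ⟨hT0, le_rfl⟩).2.eventually (isOpen_interior.mem_nhds e1)).exists
    exact c n hn
  obtain ⟨V, hV, hVU⟩ := hV
  refine ⟨V, hV, fun y hy => ?_⟩
  rw [← hωU, mem_omega_iff]
  rw [mem_omega_iff] at hy
  intro ε hε S
  obtain ⟨t, ht, p, hp, hd⟩ := hy ε hε (T + max S 0)
  simp only [reachSet, mem_iUnion] at hp
  obtain ⟨z, hz, hp⟩ := hp
  have h1 := le_max_left S 0
  have h2 := le_max_right S 0
  have e : t = T + (t - T) := by ring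
  rw [e] at hp
  obtain ⟨w, hw, hw'⟩ := reach_split hF hT0 (by linarith) hp
  exact ⟨t - T, by linarith, p, mem_reachSet ⟨interior_subset (hVU z hz hw),
    h𝒜.2.1.mem hT0 hz.2 hw⟩ hw', hd⟩

lemma omega_reach {F : X m → Set (X m)} (hF : Standing F) {B : Set (X m)} {x z : X m} {s : ℝ} (hs : 0 ≤ s)
    (hx : x ∈ B) (h : z ∈ reach F s x) : omegaLim F {z} ⊆ omegaLim F B := by
  intro y hy
  rw [mem_omega_iff] at hy ⊢
  intro ε hε T
  obtain ⟨t, ht, p, hp, hd⟩ := hy ε hε (max T 0)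
  rw [reachSet_singleton] at hp
  have h1 := le_max_left T 0
  have h2 := le_max_right T 0
  exact ⟨s + t, by linarith, p, mem_reachSet hx (reach_trans hF hs (by linarith) h hp), hd⟩

lemma omega_sub_of_inv {F : X m → Set (X m)} {A B : Set (X m)} (hA : Inv F A)
    (hB : B ⊆ A) : omegaLim F B ⊆ A := by
  rintro y ⟨t, p, ht, hp, hl⟩
  refine hA.1.isClosed.mem_of_tendsto hl ?_
  filter_upwards [ht.eventually_ge_atTop 0] with n hn
  exact hA.2.1 _ hn (reachSet_mono hB _ (hp n))

lemma dual_closed {F : X m → Set (X m)} (hF : Standing F) {𝒜 A : Set (X m)} (h𝒜 : Inv F 𝒜)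
    (hA : IsAttractorIn F 𝒜 A) : IsClosed (dualRepeller F 𝒜 A) := by
  refine isClosed_of_closure_subset fun x hx => ?_
  have hx𝒜 : x ∈ 𝒜 := h𝒜.1.isClosed.closure_subset_iff.2 (fun z hz => hz.1) hx
  refine ⟨hx𝒜, ?_⟩
  by_contra hcon
  rw [not_nonempty_iff_eq_empty, sdiff_eq_empty] at hcon
  obtain ⟨V, hV, hVA⟩ := basin_open hF h𝒜 hA hx𝒜 hcon
  obtain ⟨z, hzV, hz, w, hw, hwA⟩ := mem_closure_iff_nhds.1 hx V hV
  exact hwA (hVA (omega_mono (show ({z} : Set (X m)) ⊆ V ∩ 𝒜 from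
    singleton_subset_iff.2 ⟨hzV, hz⟩) hw))

lemma not_dual {F : X m → Set (X m)} {𝒜 A : Set (X m)} {x : X m} (hx : x ∈ 𝒜)
    (h : x ∉ dualRepeller F 𝒜 A) : omegaLim F {x} ⊆ A := by
  rw [← sdiff_eq_empty, ← not_nonempty_iff_eq_empty]
  exact fun h' => h ⟨hx, h'⟩

lemma complete_SS {F : X m → Set (X m)} (hF : Standing F) {γ : ℝ → X m} (h : IsSolOn F γ univ)
    (a b : ℝ) : SS F γ a b := (isSolOn_iff hF).1 (h.mono (subset_univ _))

lemma dual_weakInv {F : X m → Set (X m)} (hF : Standing F) {𝒜 A A' : Set (X m)} (h𝒜 : Inv F 𝒜)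
    (hA : IsAttractorIn F 𝒜 A) (hA' : IsAttractorIn F 𝒜 A') :
    WeaklyInvariant F (A' ∩ dualRepeller F 𝒜 A) := by
  rintro x ⟨hxA', hx𝒜, y, hy, hyA⟩
  have hI := inv_of_attractorIn hF h𝒜 hA'
  obtain ⟨σ, hσ⟩ := hI.2.2 x hxA'
  obtain ⟨t, γ, ht, h1, h2, h3⟩ := omega_data hF hy
  obtain ⟨Γ, g1, g2, g3, g4, g5⟩ := glue_complete hF hI hxA' hσ ht h1 h2
  have hmem : ∀ s, Γ s ∈ 𝒜 := fun s => hA'.2.1 (g2 ⟨s, rfl⟩)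
  refine ⟨Γ, g1, g3, ?_⟩
  rintro _ ⟨s, rfl⟩
  refine ⟨g2 ⟨s, rfl⟩, ?_⟩
  by_contra hcon
  have hω := not_dual (hmem s) hcon
  rcases le_total s 0 with hs | hs
  · have hr := (complete_SS hF g1 s 0).reach hF (s := s) (t := 0) le_rfl le_rfl
    rw [g3] at hr
    exact hyA (hω (omega_reach hF (by linarith) (mem_singleton _) hr hy))
  · obtain ⟨V, hV, hVA⟩ := basin_open hF h𝒜 hA (hmem s) hω
    refine hyA (hVA (omega_of_tendsto (𝒰 := (hyperfilter ℕ : Filter ℕ)) (t := fun n => t n - s)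
      (tendsto_atTop_add_const_right _ _ (hyper_tendsto ht)) ?_ (hyper_tendsto h3)))
    filter_upwards [(g5 s hs).eventually hV, (hyper_tendsto ht).eventually_ge_atTop s] with n hn hn'
    refine mem_reachSet ⟨hn, ?_⟩ ((h1 n).reach hF hs le_rfl)
    exact (h1 n).mem hF h𝒜.2.1 (by rw [h2 n]; exact hx𝒜) ⟨hs, hn'⟩

lemma alpha_sub_dual {F : X m → Set (X m)} (hF : Standing F) {𝒜 A : Set (X m)} (h𝒜 : Inv F 𝒜)
    (hA : IsAttractorIn F 𝒜 A) {γ : ℝ → X m} (hγ : IsSolOn F γ univ) (hr : range γ ⊆ 𝒜)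
    (hn : ¬ range γ ⊆ A) : alphaOf γ ⊆ dualRepeller F 𝒜 A := by
  obtain ⟨_, ⟨t0, rfl⟩, ht0⟩ := not_subset.1 hn
  rintro y ⟨t, ht, hy⟩
  have hy𝒜 : y ∈ 𝒜 := h𝒜.1.isClosed.mem_of_tendsto hy (Eventually.of_forall fun n => hr ⟨_, rfl⟩)
  by_contra hcon
  obtain ⟨V, hV, hVA⟩ := basin_open hF h𝒜 hA hy𝒜 (not_dual hy𝒜 hcon)
  refine ht0 (hVA (omega_of_tendsto (𝒰 := atTop) (t := fun n => t0 - t n) (p := fun _ => γ t0) ?_ ?_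
    tendsto_const_nhds))
  · exact tendsto_atTop_add_const_left _ _ (tendsto_neg_atBot_atTop.comp ht)
  · filter_upwards [hy.eventually hV] with n hn
    exact mem_reachSet ⟨hn, hr ⟨_, rfl⟩⟩ ((complete_SS hF hγ (t n) t0).reach hF le_rfl le_rfl)

lemma omega_dich {F : X m → Set (X m)} (hF : Standing F) {𝒜 A : Set (X m)}
    {γ : ℝ → X m} (hγ : IsSolOn F γ univ) (hr : range γ ⊆ 𝒜)
    (hn : ¬ omegaOf γ ⊆ A) : range γ ⊆ dualRepeller F 𝒜 A := by
  rintro _ ⟨s, rfl⟩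
  by_contra hcon
  have hω := not_dual (hr ⟨s, rfl⟩) hcon
  refine hn fun y hy => hω ?_
  obtain ⟨t, ht, hy⟩ := hy
  refine omega_of_tendsto (𝒰 := atTop) (t := fun n => t n - s) (tendsto_atTop_add_const_right _ _ ht)
    (Eventually.of_forall fun n => ?_) hy
  exact mem_reachSet (mem_singleton _) ((complete_SS hF hγ s (t n)).reach hF le_rfl le_rfl)

lemma alpha_nonempty {K : Set (X m)} (hK : IsCompact K) {γ : ℝ → X m} (hr : range γ ⊆ K) :
    (alphaOf γ).Nonempty := by
  obtain ⟨y, -, φ, hφ, hy⟩ := hK.tendsto_subseq (x := fun n : ℕ => γ (-(n : ℝ))) fun n => hr ⟨_, rfl⟩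
  exact ⟨y, fun n => -((φ n : ℕ) : ℝ), tendsto_neg_atTop_atBot.comp
    (tendsto_natCast_atTop_atTop.comp hφ.tendsto_atTop), hy⟩

lemma omega_nonempty {K : Set (X m)} (hK : IsCompact K) {γ : ℝ → X m} (hr : range γ ⊆ K) :
    (omegaOf γ).Nonempty := by
  obtain ⟨y, -, φ, hφ, hy⟩ := hK.tendsto_subseq (x := fun n : ℕ => γ (n : ℝ)) fun n => hr ⟨_, rfl⟩
  exact ⟨y, fun n => ((φ n : ℕ) : ℝ), tendsto_natCast_atTop_atTop.comp hφ.tendsto_atTop, hy⟩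

lemma limits_mem {K : Set (X m)} (hK : IsClosed K) {γ : ℝ → X m} (hr : range γ ⊆ K) :
    alphaOf γ ⊆ K ∧ omegaOf γ ⊆ K := by
  constructor <;>
  · rintro y ⟨t, -, hy⟩
    exact hK.mem_of_tendsto hy (Eventually.of_forall fun n => hr ⟨_, rfl⟩)

lemma mem_of_alpha {F : X m → Set (X m)} (hF : Standing F) {𝒜 A : Set (X m)} (h𝒜 : Inv F 𝒜)
    (hA : IsAttractorIn F 𝒜 A) {γ : ℝ → X m} (hγ : IsSolOn F γ univ) (hr : range γ ⊆ 𝒜)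
    (hα : alphaOf γ ⊆ A) (s : ℝ) : γ s ∈ A := by
  by_contra hs
  have h1 := alpha_sub_dual hF h𝒜 hA hγ hr (fun h => hs (h ⟨s, rfl⟩))
  obtain ⟨y, hy⟩ := alpha_nonempty h𝒜.1 hr
  obtain ⟨-, z, hz, hzA⟩ := h1 hy
  exact hzA (omega_sub_of_inv (inv_of_attractorIn hF h𝒜 hA) (singleton_subset_iff.2 (hα hy)) hz)

/-- Theorem 2.8: structural properties of Morse decompositions:
attractor–repeller pairs, disjointness / weak invariance / compactness of Morse
sets, behaviour of complete trajectories, and recovery of the Morse filtration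
via unstable sets. -/
theorem morse_decomposition_properties {m : ℕ} (F : X m → Set (X m)) (hF : Standing F)
    (𝒜 : Set (X m)) (h𝒜 : IsAttractor F 𝒜)
    (l : ℕ) (A M : ℕ → Set (X m))
    (hfil : IsMorseFiltration F 𝒜 l A)
    (hM : ∀ k, 1 ≤ k → k ≤ l → M k = A k ∩ dualRepeller F 𝒜 (A (k-1))) :
    (∀ k, 1 ≤ k → k ≤ l →
      IsAttractorIn F (A k) (A (k-1)) ∧ M k = dualRepeller F (A k) (A (k-1))) ∧
    (∀ i j, 1 ≤ i → i < j → j ≤ l → Disjoint (M i) (M j)) ∧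
    (∀ k, 1 ≤ k → k ≤ l → IsCompact (M k) ∧ WeaklyInvariant F (M k)) ∧
    (∀ γ : ℝ → X m, IsSolOn F γ univ → range γ ⊆ 𝒜 →
      (∃ k, 1 ≤ k ∧ k ≤ l ∧ range γ ⊆ M k) ∨
      (∃ i j, 1 ≤ i ∧ i < j ∧ j ≤ l ∧ alphaOf γ ⊆ M j ∧ omegaOf γ ⊆ M i)) ∧
    (∀ k, 1 ≤ k → k ≤ l → A k = ⋃ i ∈ Icc 1 k, unstableSet F 𝒜 (M i)) := by
  obtain ⟨hA0, hAl, hAm, hAt⟩ := hfil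
  have h𝒜' : Inv F 𝒜 := inv_of_attractor hF h𝒜
  have hInv : ∀ k ≤ l, Inv F (A k) := fun k hk => inv_of_attractorIn hF h𝒜' (hAt k hk)
  have hmono : ∀ i j, i ≤ j → j ≤ l → A i ⊆ A j := by
    intro i j hij
    induction j, hij using Nat.le_induction with
    | base => exact fun _ => Subset.rfl
    | succ j _ ih => exact fun hj => (ih (by omega)).trans (hAm j (by omega))
  -- location of the alpha-limit set
  have halpha : ∀ γ : ℝ → X m, IsSolOn F γ univ → ∀ k ≤ l, range γ ⊆ A k →
      ∃ j, 1 ≤ j ∧ j ≤ k ∧ range γ ⊆ A j ∧ alphaOf γ ⊆ M j := by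
    classical
    intro γ hγ k hk hr
    have hex : ∃ j, range γ ⊆ A j := ⟨k, hr⟩
    have hj := Nat.find_spec hex
    have hjk : Nat.find hex ≤ k := Nat.find_min' hex hr
    have hj1 : 1 ≤ Nat.find hex := by
      by_contra h0
      have h0 : Nat.find hex = 0 := by omega
      rw [h0, hA0] at hj
      exact hj ⟨0, rfl⟩
    refine ⟨Nat.find hex, hj1, hjk, hj, ?_⟩
    have hjl := hjk.trans hk
    rw [hM _ hj1 hjl]
    refine subset_inter (limits_mem (hInv _ hjl).1.isClosed hj).1 ?_
    exact alpha_sub_dual hF h𝒜' (hAt _ (by omega)) hγ (hj.trans (hAt _ hjl).2.1)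
      (Nat.find_min hex (by omega))
  refine ⟨?_, ?_, ?_, ?_, ?_⟩
  · intro k hk1 hkl
    have hsub : A (k - 1) ⊆ A k := hmono _ _ (by omega) hkl
    refine ⟨⟨(hAt (k - 1) (by omega)).1, hsub, ?_⟩, ?_⟩
    · obtain ⟨-, -, U, hU, hω⟩ := hAt (k - 1) (by omega)
      refine ⟨U, hU, Subset.antisymm ?_ ?_⟩
      · rw [← hω]
        exact omega_mono (inter_subset_inter_right U (hAt k hkl).2.1)
      · intro x hx
        obtain ⟨σ, s1, s2, s3⟩ := (hInv (k - 1) (by omega)).2.2 x hx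
        refine omega_of_tendsto (𝒰 := atTop) (t := fun n : ℕ => (n : ℝ)) (p := fun _ => x)
          tendsto_natCast_atTop_atTop (Eventually.of_forall fun n => ?_) tendsto_const_nhds
        have hn : -(n : ℝ) ≤ 0 := by simp
        have h1 := s3 _ hn
        have h2 := (s1 _ hn).reach hF (s := -(n : ℝ)) (t := 0) le_rfl le_rfl
        rw [s2, zero_sub, neg_neg] at h2
        exact mem_reachSet ⟨interior_subset (hU h1), hsub h1⟩ h2
    · rw [hM k hk1 hkl]
      ext x
      constructor
      · rintro ⟨h1, h2⟩
        exact ⟨h1, h2.2⟩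
      · rintro ⟨h1, h2⟩
        exact ⟨h1, (hAt k hkl).2.1 h1, h2⟩
  · intro i j hi hij hj
    rw [Set.disjoint_left]
    intro x hxi hxj
    rw [hM i hi (by omega)] at hxi
    rw [hM j (by omega) hj] at hxj
    obtain ⟨-, -, z, hz, hzA⟩ := hxj
    exact hzA (omega_sub_of_inv (hInv (j - 1) (by omega))
      (singleton_subset_iff.2 (hmono i (j - 1) (by omega) (by omega) hxi.1)) hz)
  · intro k hk1 hkl
    rw [hM k hk1 hkl]
    exact ⟨(hInv k hkl).1.inter_right (dual_closed hF h𝒜' (hAt (k - 1) (by omega))),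
      dual_weakInv hF h𝒜' (hAt (k - 1) (by omega)) (hAt k hkl)⟩
  · classical
    intro γ hγ hr
    obtain ⟨j, hj1, hjl, hrj, hαj⟩ := halpha γ hγ l le_rfl (hAl ▸ hr)
    have hωj : omegaOf γ ⊆ A j := (limits_mem (hInv j hjl).1.isClosed hrj).2
    have hex : ∃ i, omegaOf γ ⊆ A i := ⟨j, hωj⟩
    have hi := Nat.find_spec hex
    have hij : Nat.find hex ≤ j := Nat.find_min' hex hωj
    have hi1 : 1 ≤ Nat.find hex := by
      by_contra h0
      have h0 : Nat.find hex = 0 := by omega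
      rw [h0, hA0] at hi
      obtain ⟨y, hy⟩ := omega_nonempty h𝒜'.1 hr
      exact hi hy
    have hil := hij.trans hjl
    have hdual : range γ ⊆ dualRepeller F 𝒜 (A (Nat.find hex - 1)) :=
      omega_dich hF hγ hr (Nat.find_min hex (by omega))
    rcases hij.eq_or_lt with he | hlt
    · left
      refine ⟨j, hj1, hjl, ?_⟩
      rw [hM j hj1 hjl]
      rw [he] at hdual
      exact subset_inter hrj hdual
    · right
      refine ⟨Nat.find hex, j, hi1, hlt, hjl, hαj, ?_⟩
      rw [hM _ hi1 hil]
      exact subset_inter hi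
        (limits_mem (dual_closed hF h𝒜' (hAt _ (by omega))) hdual).2
  · intro k hk1 hkl
    ext x
    simp only [mem_iUnion]
    constructor
    · intro hx
      obtain ⟨γ, g1, g2, g3⟩ := exists_complete hF (hInv k hkl) hx
      obtain ⟨j, hj1, hjk, -, hα⟩ := halpha γ g1 k hkl g2
      exact ⟨j, ⟨hj1, hjk⟩, γ, g1, g2.trans (hAt k hkl).2.1, g3, hα⟩
    · rintro ⟨i, ⟨hi1, hik⟩, γ, g1, g2, g3, hα⟩
      have hil := hik.trans hkl
      rw [hM i hi1 hil] at hα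
      have := mem_of_alpha hF h𝒜' (hAt i hil) g1 g2 (hα.trans inter_subset_left) 0
      rw [g3] at this
      exact hmono i k hik hkl this

end DI
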